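/- Let p, q ∈ P_H and α, β > 0. Then the Fisher information satisfies I(αp + βq) ≤ α I(p) + β I(q). If in addition 1/p ∈ L^∞_loc(ℝ^d), then equality holds if and only if p = q (equivalently, the densities p and q are proportional almost everywhere). -/

import Mathlib

open MeasureTheory Real Filter Set
open scoped RealInnerProductSpace Topology ENNReal NNReal

noncomputable section

/-- Euclidean space `ℝ^d`. -/
abbrev Euc (d : ℕ) := EuclideanSpace ℝ (Fin d)
/-- `p : ℝ^d → ℝ` is a probability density. -/
def IsDensity {d : ℕ} (p : Euc d → ℝ) : Prop :=
  (∀ x, 0 ≤ p x) ∧ Integrable p ∧ (∫ x, p x) = 1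

/-- The density has a finite second moment. -/
def HasSecondMoment {d : ℕ} (p : Euc d → ℝ) : Prop :=
  Integrable fun x => ‖x‖ ^ 2 * p x

/-- The square root `√p` of a density. -/
def sqrtFn {d : ℕ} (p : Euc d → ℝ) : Euc d → ℝ := fun x => Real.sqrt (p x)

/-- Membership in `P_H`: a probability density with finite second moment whose
square root belongs to `H¹` (differentiable with square-integrable gradient). -/
def MemPH {d : ℕ} (p : Euc d → ℝ) : Prop :=
  IsDensity p ∧ HasSecondMoment p ∧ Differentiable ℝ (sqrtFn p) ∧
    Integrable fun x => ‖gradient (sqrtFn p) x‖ ^ 2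

/-- Fisher information `I(p) = ∫ |∇√p|²`. -/
def FisherInfo {d : ℕ} (p : Euc d → ℝ) : ℝ :=
  ∫ x, ‖gradient (sqrtFn p) x‖ ^ 2

/-- Entropy `H(p) = ∫ p log p`. -/
def Entropy {d : ℕ} (p : Euc d → ℝ) : ℝ := ∫ x, p x * Real.log (p x)

/-- The measure with density `p` w.r.t. Lebesgue measure. -/
def toMeas {d : ℕ} (p : Euc d → ℝ) : Measure (Euc d) :=
  volume.withDensity fun x => ENNReal.ofReal (p x)

/-- `P₂(ℝ^d)`: probability measures with finite second moment. -/
def P2 (d : ℕ) : Set (Measure (Euc d)) :=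
  {μ | IsProbabilityMeasure μ ∧ Integrable (fun x => ‖x‖ ^ 2) μ}

/-!
In terms of the amplitudes `f = √(αp)` and `g = √(βq)`, Fisher information is the Dirichlet energy,
and the claim is the convexity inequality for gradients, `∫ |∇√(f² + g²)|² ≤ ∫ |∇f|² + |∇g|²`.
By Lagrange's identity the pointwise deficit is `|f ∇g - g ∇f|² / (f² + g²) ≥ 0`. Where `f` does
not vanish, `f ∇g - g ∇f = f² ∇(g / f)`, so equality forces `∇(g / f) = 0` almost everywhere. An
everywhere differentiable function whose gradient vanishes almost everywhere is constant, because it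
is constant along almost every line; hence equality holds exactly when `g` is a multiple of `f`.
-/

open scoped Gradient

section Gradient

variable {E : Type*} [NormedAddCommGroup E] [InnerProductSpace ℝ E]

lemma norm_smul_add_smul_sq_add_norm_smul_sub_smul_sq (s t : ℝ) (a b : E) :
    ‖s • a + t • b‖ ^ 2 + ‖s • b - t • a‖ ^ 2 = (s ^ 2 + t ^ 2) * (‖a‖ ^ 2 + ‖b‖ ^ 2) := by
  rw [norm_add_sq_real, norm_sub_sq_real]
  simp only [norm_smul, inner_smul_left, inner_smul_right, mul_pow, Real.norm_eq_abs, sq_abs,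
    real_inner_comm a b, conj_trivial]
  ring

variable [CompleteSpace E] {f g : E → ℝ} {f' g' x : E}

lemma norm_gradient (f : E → ℝ) (x : E) : ‖∇ f x‖ = ‖fderiv ℝ f x‖ :=
  LinearIsometryEquiv.norm_map _ _

lemma gradient_eq_zero_iff : ∇ f x = 0 ↔ fderiv ℝ f x = 0 := by
  rw [← norm_eq_zero, norm_gradient, norm_eq_zero]

lemma gradient_const_mul (c : ℝ) (f : E → ℝ) (x : E) : ∇ (fun y => c * f y) x = c • ∇ f x := by
  have h : fderiv ℝ (fun y => c * f y) = c • fderiv ℝ f := fderiv_const_smul_field c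
  simp [gradient, h]

lemma gradient_sqrt_of_nonpos (hx : f x ≤ 0) : ∇ (fun y => √(f y)) x = 0 := by
  have hmin : IsLocalMin (fun y => √(f y)) x :=
    Eventually.of_forall fun y => by simp only [Real.sqrt_eq_zero_of_nonpos hx, Real.sqrt_nonneg]
  exact gradient_eq_zero_iff.2 hmin.fderiv_eq_zero

lemma hasGradientAt_sqrt_sq_add_sq (hf : HasGradientAt f f' x) (hg : HasGradientAt g g' x)
    (hx : f x ^ 2 + g x ^ 2 ≠ 0) :
    HasGradientAt (fun y => √(f y ^ 2 + g y ^ 2))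
      ((√(f x ^ 2 + g x ^ 2))⁻¹ • (f x • f' + g x • g')) x := by
  rw [hasGradientAt_iff_hasFDerivAt] at hf hg ⊢
  refine (((HasFDerivAt.pow hf 2).fun_add (HasFDerivAt.pow hg 2)).sqrt hx).congr_fderiv ?_
  ext v
  simp only [one_div, mul_inv_rev, Nat.add_one_sub_one, pow_one, nsmul_eq_mul, Nat.cast_ofNat,
    smul_add, add_apply, smul_apply, InnerProductSpace.toDual_apply_apply, smul_eq_mul, map_add,
    map_smul]
  ring

lemma hasGradientAt_div (hg : HasGradientAt g g' x) (hf : HasGradientAt f f' x) (hx : f x ≠ 0) :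
    HasGradientAt (fun y => g y / f y) ((f x ^ 2)⁻¹ • (f x • g' - g x • f')) x := by
  rw [hasGradientAt_iff_hasFDerivAt] at hf hg ⊢
  have hinv := (hasDerivAt_inv hx).comp_hasFDerivAt x hf
  simp only [div_eq_mul_inv]
  refine (hg.fun_mul hinv).congr_fderiv ?_
  ext v
  simp only [neg_smul, smul_neg, Function.comp_apply, add_apply, neg_apply, smul_apply,
    InnerProductSpace.toDual_apply_apply, smul_eq_mul, map_smul, map_sub, sub_apply]
  field

lemma sq_add_sq_mul_norm_gradient_sqrt_sq (hf : DifferentiableAt ℝ f x)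
    (hg : DifferentiableAt ℝ g x) :
    (f x ^ 2 + g x ^ 2) * ‖∇ (fun y => √(f y ^ 2 + g y ^ 2)) x‖ ^ 2
        + ‖f x • ∇ g x - g x • ∇ f x‖ ^ 2
      = (f x ^ 2 + g x ^ 2) * (‖∇ f x‖ ^ 2 + ‖∇ g x‖ ^ 2) := by
  rw [← norm_smul_add_smul_sq_add_norm_smul_sub_smul_sq]
  congr 1
  by_cases hx : f x ^ 2 + g x ^ 2 = 0
  · obtain ⟨hfx, hgx⟩ : f x = 0 ∧ g x = 0 := by
      simpa using (add_eq_zero_iff_of_nonneg (sq_nonneg (f x)) (sq_nonneg (g x))).1 hx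
    simp [hfx, hgx]
  · have hgrad := hasGradientAt_sqrt_sq_add_sq hf.hasGradientAt hg.hasGradientAt hx
    rw [hgrad.gradient, norm_smul, mul_pow, norm_inv, inv_pow, Real.norm_eq_abs, sq_abs,
      Real.sq_sqrt (by positivity), mul_inv_cancel_left₀ hx]

lemma norm_gradient_sqrt_sq_add_sq_sq_le (hf : DifferentiableAt ℝ f x)
    (hg : DifferentiableAt ℝ g x) :
    ‖∇ (fun y => √(f y ^ 2 + g y ^ 2)) x‖ ^ 2 ≤ ‖∇ f x‖ ^ 2 + ‖∇ g x‖ ^ 2 := by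
  rcases (add_nonneg (sq_nonneg (f x)) (sq_nonneg (g x))).eq_or_lt' with hx | hx
  · rw [gradient_sqrt_of_nonpos (f := fun y => f y ^ 2 + g y ^ 2) hx.le, norm_zero,
      zero_pow two_ne_zero]
    positivity
  · refine le_of_mul_le_mul_left ?_ hx
    rw [← sq_add_sq_mul_norm_gradient_sqrt_sq hf hg]
    exact le_add_of_nonneg_right (sq_nonneg _)

lemma norm_gradient_sqrt_sq_add_sq_sq_eq_iff (hf : DifferentiableAt ℝ f x)
    (hg : DifferentiableAt ℝ g x) (hx : f x ^ 2 + g x ^ 2 ≠ 0) :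
    ‖∇ (fun y => √(f y ^ 2 + g y ^ 2)) x‖ ^ 2 = ‖∇ f x‖ ^ 2 + ‖∇ g x‖ ^ 2 ↔
      f x • ∇ g x = g x • ∇ f x := by
  rw [← mul_right_inj' hx, ← sq_add_sq_mul_norm_gradient_sqrt_sq hf hg, left_eq_add,
    sq_eq_zero_iff, norm_eq_zero, sub_eq_zero]

end Gradient

section DirichletEnergy

variable {E : Type*} [NormedAddCommGroup E] [InnerProductSpace ℝ E] [CompleteSpace E]
  [MeasurableSpace E]

/-- The Dirichlet energy `∫ |∇f|² dμ`, without the factor `1/2`, so that the Fisher information of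
a density `p` is the Dirichlet energy of `√p`. It is `0` if `|∇f|²` is not integrable. -/
def dirichletEnergy (μ : Measure E) (f : E → ℝ) : ℝ :=
  ∫ x, ‖∇ f x‖ ^ 2 ∂μ

variable {μ : Measure E} {f g : E → ℝ}

lemma dirichletEnergy_const_mul (c : ℝ) :
    dirichletEnergy μ (fun x => c * f x) = c ^ 2 * dirichletEnergy μ f := by
  simp only [dirichletEnergy, gradient_const_mul, norm_smul, mul_pow, Real.norm_eq_abs, sq_abs,
    integral_const_mul]

lemma integrable_norm_gradient_const_mul_sq (hIf : Integrable (fun x => ‖∇ f x‖ ^ 2) μ) (c : ℝ) :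
    Integrable (fun x => ‖∇ (fun y => c * f y) x‖ ^ 2) μ := by
  simpa only [gradient_const_mul, norm_smul, mul_pow] using hIf.const_mul (‖c‖ ^ 2)

variable [OpensMeasurableSpace E]

lemma measurable_norm_gradient (f : E → ℝ) : Measurable fun x => ‖∇ f x‖ := by
  simpa only [norm_gradient] using (measurable_fderiv ℝ f).norm

variable (hf : Differentiable ℝ f) (hg : Differentiable ℝ g)
  (hIf : Integrable (fun x => ‖∇ f x‖ ^ 2) μ) (hIg : Integrable (fun x => ‖∇ g x‖ ^ 2) μ)

include hf hg hIf hIg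

lemma integrable_norm_gradient_sqrt_sq_add_sq_sq :
    Integrable (fun x => ‖∇ (fun y => √(f y ^ 2 + g y ^ 2)) x‖ ^ 2) μ := by
  refine (hIf.add hIg).mono' ((measurable_norm_gradient _).pow_const 2).aestronglyMeasurable
    (Eventually.of_forall fun x => ?_)
  rw [Real.norm_of_nonneg (by positivity)]
  exact norm_gradient_sqrt_sq_add_sq_sq_le (hf x) (hg x)

theorem dirichletEnergy_sqrt_sq_add_sq_le :
    dirichletEnergy μ (fun x => √(f x ^ 2 + g x ^ 2))
      ≤ dirichletEnergy μ f + dirichletEnergy μ g := by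
  unfold dirichletEnergy
  rw [← integral_add hIf hIg]
  exact integral_mono (integrable_norm_gradient_sqrt_sq_add_sq_sq hf hg hIf hIg) (hIf.add hIg)
    fun x => norm_gradient_sqrt_sq_add_sq_sq_le (hf x) (hg x)

theorem dirichletEnergy_sqrt_sq_add_sq_eq_iff (hfg : ∀ᵐ x ∂μ, f x ^ 2 + g x ^ 2 ≠ 0) :
    dirichletEnergy μ (fun x => √(f x ^ 2 + g x ^ 2)) = dirichletEnergy μ f + dirichletEnergy μ g ↔
      ∀ᵐ x ∂μ, f x • ∇ g x = g x • ∇ f x := by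
  unfold dirichletEnergy
  rw [← integral_add hIf hIg]
  refine (integral_eq_iff_of_ae_le
    (integrable_norm_gradient_sqrt_sq_add_sq_sq hf hg hIf hIg) (hIf.add hIg)
    (Eventually.of_forall fun x => norm_gradient_sqrt_sq_add_sq_sq_le (hf x) (hg x))).trans
    (eventually_congr ?_)
  filter_upwards [hfg] with x hx
  exact norm_gradient_sqrt_sq_add_sq_sq_eq_iff (hf x) (hg x) hx

end DirichletEnergy

section Rigidity

variable {F : Type*} [NormedAddCommGroup F] [NormedSpace ℝ F] [CompleteSpace F]

lemma eq_of_ae_deriv_eq_zero {u : ℝ → F} (hu : Differentiable ℝ u) (h : ∀ᵐ t, deriv u t = 0)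
    (a b : ℝ) : u a = u b := by
  have hint : IntervalIntegrable (deriv u) volume a b :=
    (intervalIntegrable_const (c := 0)).congr_ae (ae_restrict_of_ae (h.mono fun t ht => ht.symm))
  have hsub : ∫ t in a..b, deriv u t = u b - u a :=
    intervalIntegral.integral_eq_sub_of_hasDerivAt (fun t _ => (hu t).hasDerivAt) hint
  rw [intervalIntegral.integral_zero_ae (h.mono fun t ht _ => ht)] at hsub
  exact (sub_eq_zero.1 hsub.symm).symm

lemma eq_of_ae_fderiv_eq_zero {E : Type*} [NormedAddCommGroup E] [NormedSpace ℝ E]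
    [FiniteDimensional ℝ E] [MeasurableSpace E] [BorelSpace E] (μ : Measure E)
    [μ.IsAddHaarMeasure] {u : E → F} (hu : Differentiable ℝ u) (h : ∀ᵐ x ∂μ, fderiv ℝ u x = 0)
    (x y : E) : u x = u y := by
  have translate : ∀ v, (fun x => u (x + v)) = u := by
    intro v
    have hlines : ∀ᵐ x ∂μ, ∀ᵐ t : ℝ, fderiv ℝ u (x + t • v) = 0 :=
      (ae_ae_add_linearMap_mem_iff (LinearMap.toSpanSingleton ℝ E v) volume μ
        (measurable_fderiv ℝ u (measurableSet_singleton 0))).2 h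
    refine (Continuous.ae_eq_iff_eq μ (hu.continuous.comp (by fun_prop)) hu.continuous).1 ?_
    filter_upwards [hlines] with x hx
    have hderiv : ∀ t : ℝ, HasDerivAt (fun s : ℝ => u (x + s • v)) (fderiv ℝ u (x + t • v) v) t :=
      fun t => (hu _).hasFDerivAt.comp_hasDerivAt t
        (by simpa using ((hasDerivAt_id t).smul_const v).const_add x)
    simpa using eq_of_ae_deriv_eq_zero (fun t => (hderiv t).differentiableAt)
      (hx.mono fun t ht => by rw [(hderiv t).deriv, ht, zero_apply]) 1 0
  simpa using (congrFun (translate (y - x)) x).symm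

theorem ae_smul_gradient_eq_iff {E : Type*} [NormedAddCommGroup E] [InnerProductSpace ℝ E]
    [FiniteDimensional ℝ E] [MeasurableSpace E] [BorelSpace E] {μ : Measure E}
    [μ.IsAddHaarMeasure] {f g : E → ℝ} (hf : Differentiable ℝ f) (hg : Differentiable ℝ g)
    (hf₀ : ∀ x, f x ≠ 0) :
    (∀ᵐ x ∂μ, f x • ∇ g x = g x • ∇ f x) ↔ ∃ c : ℝ, ∀ᵐ x ∂μ, g x = c * f x := by
  constructor
  · intro h
    have hdiv x := hasGradientAt_div (hg x).hasGradientAt (hf x).hasGradientAt (hf₀ x)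
    have hconst := eq_of_ae_fderiv_eq_zero μ (fun x => (hdiv x).differentiableAt) <| h.mono
      fun x hx => gradient_eq_zero_iff.1 <| by
        rw [(hdiv x).gradient, hx, sub_self, smul_zero]
    exact ⟨g 0 / f 0, Eventually.of_forall fun x => (div_eq_iff (hf₀ x)).1 (hconst x 0)⟩
  · rintro ⟨c, hc⟩
    obtain rfl : g = fun x => c * f x :=
      (Continuous.ae_eq_iff_eq μ hg.continuous (hf.continuous.const_mul c)).1 hc
    exact Eventually.of_forall fun x => by
      rw [gradient_const_mul, smul_smul, mul_comm]

end Rigidity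

lemma pos_of_ae_locally_bounded_below {E : Type*} [SeminormedAddCommGroup E] [MeasurableSpace E]
    {μ : Measure E} [μ.IsOpenPosMeasure] {p : E → ℝ} (hp : Continuous p)
    (h : ∀ R : ℝ, ∃ ε > (0 : ℝ), ∀ᵐ x ∂μ, ‖x‖ ≤ R → ε ≤ p x) (x : E) : 0 < p x := by
  obtain ⟨ε, hε, hbound⟩ := h (‖x‖ + 1)
  have hclosed : IsClosed {y | ‖x‖ + 1 ≤ ‖y‖ ∨ ε ≤ p y} :=
    (isClosed_le continuous_const continuous_norm).union (isClosed_le continuous_const hp)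
  have hdense : Dense {y | ‖x‖ + 1 ≤ ‖y‖ ∨ ε ≤ p y} :=
    Measure.dense_of_ae (hbound.mono fun y hy => (le_total _ _).imp_right hy)
  have hx : ‖x‖ + 1 ≤ ‖x‖ ∨ ε ≤ p x := hclosed.closure_subset (hdense x)
  exact hε.trans_le (hx.resolve_left (by simp))

lemma IsDensity.ae_eq_iff_exists_mul {d : ℕ} {p q : Euc d → ℝ} (hp : IsDensity p)
    (hq : IsDensity q) : p =ᵐ[volume] q ↔ ∃ c : ℝ, ∀ᵐ x, q x = c * p x := by
  constructor
  · exact fun h => ⟨1, h.mono fun x hx => by rw [hx, one_mul]⟩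
  · rintro ⟨c, hc⟩
    have hc₁ : c = 1 := by
      rw [← hq.2.2, integral_congr_ae hc, integral_const_mul, hp.2.2, mul_one]
    exact hc.mono fun x hx => by rw [hx, hc₁, one_mul]

lemma MemPH.continuous {d : ℕ} {p : Euc d → ℝ} (hp : MemPH p) : Continuous p := by
  obtain ⟨⟨hp₀, -⟩, -, hdiff, -⟩ := hp
  have hsq : p = fun x => sqrtFn p x ^ 2 := funext fun x => (Real.sq_sqrt (hp₀ x)).symm
  rw [hsq]
  exact hdiff.continuous.pow 2

lemma exists_ae_mul_sqrt_eq_mul_iff {Ω : Type*} [MeasurableSpace Ω] {μ : Measure Ω} {p q : Ω → ℝ}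
    {a b : ℝ} (hp : ∀ x, 0 ≤ p x) (hq : ∀ x, 0 ≤ q x) (ha : a ≠ 0) (hb : b ≠ 0) :
    (∃ c : ℝ, ∀ᵐ x ∂μ, b * √(q x) = c * (a * √(p x))) ↔ ∃ c : ℝ, ∀ᵐ x ∂μ, q x = c * p x := by
  constructor
  · rintro ⟨c, hc⟩
    refine ⟨(c * a / b) ^ 2, hc.mono fun x hx => ?_⟩
    have hsqrt : √(q x) = c * a / b * √(p x) := by
      field_simp
      linear_combination hx
    rw [← Real.sq_sqrt (hq x), hsqrt, mul_pow, Real.sq_sqrt (hp x)]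
  · rintro ⟨c, hc⟩
    refine ⟨b * √c / a, hc.mono fun x hx => ?_⟩
    rw [hx, Real.sqrt_mul' c (hp x)]
    field

theorem fisher_info_convex_general {E : Type*} [NormedAddCommGroup E] [InnerProductSpace ℝ E]
    [FiniteDimensional ℝ E] [MeasurableSpace E] [BorelSpace E] {μ : Measure E}
    [μ.IsAddHaarMeasure] {p q : E → ℝ} {α β : ℝ} (hα : 0 < α) (hβ : 0 < β)
    (hp₀ : ∀ x, 0 ≤ p x) (hq₀ : ∀ x, 0 ≤ q x)
    (hp : Differentiable ℝ fun x => √(p x)) (hq : Differentiable ℝ fun x => √(q x))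
    (hIp : Integrable (fun x => ‖∇ (fun y => √(p y)) x‖ ^ 2) μ)
    (hIq : Integrable (fun x => ‖∇ (fun y => √(q y)) x‖ ^ 2) μ) :
    dirichletEnergy μ (fun x => √(α * p x + β * q x)) ≤
      α * dirichletEnergy μ (fun x => √(p x)) + β * dirichletEnergy μ (fun x => √(q x)) ∧
    ((∀ x, 0 < p x) →
      (dirichletEnergy μ (fun x => √(α * p x + β * q x)) =
          α * dirichletEnergy μ (fun x => √(p x)) + β * dirichletEnergy μ (fun x => √(q x)) ↔
        ∃ c : ℝ, ∀ᵐ x ∂μ, q x = c * p x)) := by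
  have hmix : (fun x => √(α * p x + β * q x)) =
      fun x => √((√α * √(p x)) ^ 2 + (√β * √(q x)) ^ 2) := by
    simp only [mul_pow, Real.sq_sqrt hα.le, Real.sq_sqrt hβ.le, Real.sq_sqrt (hp₀ _),
      Real.sq_sqrt (hq₀ _)]
  have hscale {γ : ℝ} (hγ : 0 < γ) (r : E → ℝ) : γ * dirichletEnergy μ (fun x => √(r x)) =
      dirichletEnergy μ (fun x => √γ * √(r x)) := by
    rw [dirichletEnergy_const_mul, Real.sq_sqrt hγ.le]
  have hf := hp.const_mul √α
  have hg := hq.const_mul √β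
  have hIf := integrable_norm_gradient_const_mul_sq hIp √α
  have hIg := integrable_norm_gradient_const_mul_sq hIq √β
  rw [hmix, hscale hα, hscale hβ]
  refine ⟨dirichletEnergy_sqrt_sq_add_sq_le hf hg hIf hIg, fun hpos => ?_⟩
  have hf₀ x : √α * √(p x) ≠ 0 := (mul_pos (sqrt_pos.2 hα) (sqrt_pos.2 (hpos x))).ne'
  have hsum x : (√α * √(p x)) ^ 2 + (√β * √(q x)) ^ 2 ≠ 0 :=
    (add_pos_of_pos_of_nonneg (sq_pos_of_ne_zero (hf₀ x)) (sq_nonneg _)).ne'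
  rw [dirichletEnergy_sqrt_sq_add_sq_eq_iff hf hg hIf hIg (Eventually.of_forall hsum),
    ae_smul_gradient_eq_iff hf hg hf₀,
    exists_ae_mul_sqrt_eq_mul_iff hp₀ hq₀ (sqrt_pos.2 hα).ne' (sqrt_pos.2 hβ).ne']

/-- Convexity-type inequality for the Fisher information:
`I(αp + βq) ≤ α I(p) + β I(q)` for `p, q ∈ P_H` and `α, β > 0`; if moreover
`1/p ∈ L^∞_loc`, equality holds if and only if `p = q` a.e. -/
theorem fisher_info_convex {d : ℕ} (p q : Euc d → ℝ) (α β : ℝ)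
    (hα : 0 < α) (hβ : 0 < β) (hp : MemPH p) (hq : MemPH q) :
    FisherInfo (fun x => α * p x + β * q x) ≤ α * FisherInfo p + β * FisherInfo q ∧
    ((∀ R : ℝ, ∃ ε > (0:ℝ), ∀ᵐ x : Euc d, ‖x‖ ≤ R → ε ≤ p x) →
      (FisherInfo (fun x => α * p x + β * q x) = α * FisherInfo p + β * FisherInfo q ↔
        p =ᵐ[volume] q)) :=
  have h := fisher_info_convex_general hα hβ hp.1.1 hq.1.1 hp.2.2.1 hq.2.2.1 hp.2.2.2 hq.2.2.2
  ⟨h.1, fun hloc => (h.2 (pos_of_ae_locally_bounded_below hp.continuous hloc)).trans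
    (hp.1.ae_eq_iff_exists_mul hq.1).symm⟩
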